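/- arXiv:1808.04917 — 3 statements merged into one kernel-verified Lean document; each statement's English description precedes it below -/
import Mathlib

section
/- For every integer i, the element γ_i lies in the ideal A₁ generated by (ε₀ − 1)(ε₁ − 1); that is, γ_i is divisible in Λ by both ε₀ − 1 and ε₁ − 1 and belongs to ⟨(ε₀ − 1)(ε₁ − 1)⟩. -/
noncomputable section

/-- The group `μₙ × μₙ`, realized as `Multiplicative (ZMod n) × Multiplicative (ZMod n)`. -/
abbrev MuMu (n : ℕ) : Type := Multiplicative (ZMod n) × Multiplicative (ZMod n)

/-- The group ring `Λ = ℤ[μₙ × μₙ]`. -/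
abbrev Lam (n : ℕ) : Type := MonoidAlgebra ℤ (MuMu n)

/-- The first standard generator of `μₙ × μₙ`. -/
def g0 (n : ℕ) : MuMu n := (Multiplicative.ofAdd 1, 1)

/-- The second standard generator of `μₙ × μₙ`. -/
def g1 (n : ℕ) : MuMu n := (1, Multiplicative.ofAdd 1)

/-- `ε₀`, the first standard generator viewed in `Λ`. -/
def eps0 (n : ℕ) : Lam n := MonoidAlgebra.of ℤ (MuMu n) (g0 n)

/-- `ε₁`, the second standard generator viewed in `Λ`. -/
def eps1 (n : ℕ) : Lam n := MonoidAlgebra.of ℤ (MuMu n) (g1 n)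

/-- The ideal `A₁ = ⟨(ε₀ − 1)(ε₁ − 1)⟩ ⊆ Λ`. -/
def A1 (n : ℕ) : Ideal (Lam n) := Ideal.span {(eps0 n - 1) * (eps1 n - 1)}

/-- `N = ∑_{k=0}^{n-1} ε₀^k ε₁^k ∈ Λ`. -/
def Nel (n : ℕ) : Lam n := ∑ k ∈ Finset.range n, eps0 n ^ k * eps1 n ^ k

/-- `γ_i = ε₀^{-i} (1 - ε₁) N ∈ Λ`, for `i : ℤ` (the power `ε₀^{-i}` being the power of
the corresponding group element). -/
def gam (n : ℕ) (i : ℤ) : Lam n :=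
  MonoidAlgebra.of ℤ (MuMu n) (g0 n ^ (-i)) * ((1 - eps1 n) * Nel n)

/-- The `ℤ`-submodule `S ⊆ Λ` spanned by `{γ_i : 0 ≤ i ≤ n−1}`. -/
def Sgam (n : ℕ) : Submodule ℤ (Lam n) :=
  Submodule.span ℤ {x : Lam n | ∃ i : ℕ, i < n ∧ x = gam n i}

/-! Replacing `x` by `1` in `∑ x ^ k * y ^ k` changes it by a multiple of `x - 1` and leaves the
geometric sum of `y`, which `1 - y` annihilates because `y ^ n = 1`. Hence `1 - y` times the sum is
`1 - y` times a multiple of `x - 1`. -/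

theorem sub_one_dvd_sum_pow_mul_sub_sum {R : Type*} [Ring R] (x : R) (s : Finset ℕ) (f : ℕ → R) :
    x - 1 ∣ ∑ k ∈ s, x ^ k * f k - ∑ k ∈ s, f k := by
  simp_rw [← Finset.sum_sub_distrib, ← sub_one_mul]
  exact Finset.dvd_sum fun k _ => (sub_one_dvd_pow_sub_one x k).mul_right (f k)

section CommRing

variable {R : Type*} [CommRing R]

theorem sub_one_mul_sub_one_dvd_one_sub_mul_sum (x : R) {y : R} {n : ℕ} (hy : y ^ n = 1) :
    (x - 1) * (y - 1) ∣ (1 - y) * ∑ k ∈ Finset.range n, x ^ k * y ^ k := by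
  have one_sub_mul_geom_sum : (1 - y) * ∑ k ∈ Finset.range n, y ^ k = 0 := by
    rw [mul_neg_geom_sum, hy, sub_self]
  have y_sub_one_dvd : y - 1 ∣ 1 - y := dvd_sub_comm.mp dvd_rfl
  calc (x - 1) * (y - 1)
      ∣ (∑ k ∈ Finset.range n, x ^ k * y ^ k - ∑ k ∈ Finset.range n, y ^ k) * (1 - y) :=
        mul_dvd_mul (sub_one_dvd_sum_pow_mul_sub_sum x _ _) y_sub_one_dvd
    _ = (1 - y) * ∑ k ∈ Finset.range n, x ^ k * y ^ k := by
        rw [mul_comm, mul_sub, one_sub_mul_geom_sum, sub_zero]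

theorem stmt_6_general (a x : R) {y : R} {n : ℕ} (hy : y ^ n = 1) :
    (x - 1 ∣ a * ((1 - y) * ∑ k ∈ Finset.range n, x ^ k * y ^ k)) ∧
      (y - 1 ∣ a * ((1 - y) * ∑ k ∈ Finset.range n, x ^ k * y ^ k)) ∧
      a * ((1 - y) * ∑ k ∈ Finset.range n, x ^ k * y ^ k) ∈ Ideal.span {(x - 1) * (y - 1)} := by
  have product_dvd := (sub_one_mul_sub_one_dvd_one_sub_mul_sum x hy).mul_left a
  exact ⟨dvd_of_mul_right_dvd product_dvd, dvd_of_mul_left_dvd product_dvd,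
    Ideal.mem_span_singleton.mpr product_dvd⟩

end CommRing

theorem MuMu.pow_eq_one {n : ℕ} (u : MuMu n) : u ^ n = 1 := by
  ext <;> exact ZModModule.char_nsmul_eq_zero n (_ : ZMod n)

theorem eps1_pow_eq_one (n : ℕ) : eps1 n ^ n = 1 := by
  rw [eps1, ← map_pow, MuMu.pow_eq_one, map_one]

/-- for every integer `i`, the element `γ_i` is divisible in `Λ` by both
`ε₀ − 1` and `ε₁ − 1`, and it lies in the ideal `A₁ = ⟨(ε₀ − 1)(ε₁ − 1)⟩`. -/
theorem stmt_6 (n : ℕ) (hn : 3 ≤ n) (i : ℤ) :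
    (eps0 n - 1 ∣ gam n i) ∧ (eps1 n - 1 ∣ gam n i) ∧ gam n i ∈ A1 n :=
  stmt_6_general _ (eps0 n) (eps1_pow_eq_one n)
end
end

section
/- The quotient ℤ-module A₁/S is a free ℤ-module of rank (n−1)(n−2). -/
noncomputable section

/-- `A₁` regarded as a `ℤ`-submodule of `Λ`. -/
abbrev A1Z (n : ℕ) : Submodule ℤ (Lam n) := (A1 n).restrictScalars ℤ

/-- `S` regarded as a `ℤ`-submodule of `A₁` (note `S ⊆ A₁`). -/
abbrev SgamInA1 (n : ℕ) : Submodule ℤ (A1Z n) := (Sgam n).comap (A1Z n).subtype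

/-!
Identify `R[G × G]`, for `G` cyclic, with the `G × G` matrices over `R`. Then `A₁` becomes the
module of matrices whose row sums and column sums vanish, that is, zero-sum families of zero-sum
rows, and `S` becomes the module of matrices `(a, b) ↦ z (a⁻¹ * b)` with `∑ z = 0`. Such a matrix
has `z` as its row at `1`, so modulo `S` every matrix in `A₁` can be normalised to have zero row
at `1`. The remaining rows are subject to the single relation that they sum to zero, so all of them
but one are free. As the zero-sum rows themselves form a free module of rank `n - 1`, the quotient
is free of rank `(n - 2) * (n - 1)`.
-/

open Module
open MonoidAlgebra (of)
open scoped MonoidAlgebra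

section ZeroSum

variable {R M ι : Type*} [Ring R] [AddCommGroup M] [Module R M] [Fintype ι]

/-- The module of families in `N` indexed by `ι` whose sum vanishes. It is a submodule of `ι → M`
rather than of `ι → N`, so that `zeroSum ι (zeroSum κ ⊤)` consists of the matrices all of whose
row sums and column sums vanish. -/
def zeroSum (ι : Type*) [Fintype ι] (N : Submodule R M) : Submodule R (ι → M) :=
  Submodule.pi Set.univ (fun _ => N) ⊓ LinearMap.ker (∑ i, LinearMap.proj i)

namespace zeroSum

variable {N : Submodule R M}

lemma mem_iff {F : ι → M} : F ∈ zeroSum ι N ↔ (∀ i, F i ∈ N) ∧ ∑ i, F i = 0 := by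
  simp [zeroSum, Submodule.mem_pi]

lemma mem_top_iff {F : ι → M} : F ∈ zeroSum ι (⊤ : Submodule R M) ↔ ∑ i, F i = 0 := by
  simp [mem_iff]

variable (N) in
/-- A zero-sum family is determined by its restriction to the complement of an index `i₀`, and
this restriction is arbitrary. -/
def restrictNeEquiv [DecidableEq ι] (i₀ : ι) : zeroSum ι N ≃ₗ[R] ({i // i ≠ i₀} → N) :=
  LinearEquiv.ofBijective
    { toFun := fun F i => ⟨F.1 i, (mem_iff.1 F.2).1 i⟩
      map_add' := fun _ _ => rfl
      map_smul' := fun _ _ => rfl } <| by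
    have sum_split (F : ι → M) := Fintype.sum_eq_add_sum_subtype_ne F i₀
    constructor
    · intro F F' h
      have hne (i : {i // i ≠ i₀}) : F.1 i = F'.1 i := congrArg Subtype.val (congrFun h i)
      have hsum : ∑ i, F.1 i = ∑ i, F'.1 i :=
        (mem_iff.1 F.2).2.trans (mem_iff.1 F'.2).2.symm
      simp only [sum_split, hne, add_left_inj] at hsum
      ext i
      obtain rfl | hi := eq_or_ne i i₀
      exacts [hsum, hne ⟨i, hi⟩]
    · intro D
      let F : ι → N := fun i => if h : i = i₀ then -∑ j, D j else D ⟨i, h⟩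
      have hF : (fun i => (F i : M)) ∈ zeroSum ι N := by
        refine mem_iff.2 ⟨fun i => (F i).2, ?_⟩
        rw [sum_split]
        have hne (i : {i // i ≠ i₀}) : F i = D i := dif_neg i.2
        simp only [hne]
        simp [F]
      refine ⟨⟨_, hF⟩, ?_⟩
      ext i
      simp [F, i.2]

variable (ι N) in
lemma free [Nonempty ι] [Free R N] : Free R (zeroSum ι N) := by
  classical exact .of_equiv (restrictNeEquiv N (Classical.arbitrary ι)).symm

variable (ι N) in
lemma finrank_eq [Nonempty ι] [StrongRankCondition R] [Free R N] [Module.Finite R N] :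
    finrank R (zeroSum ι N) = (Fintype.card ι - 1) * finrank R N := by
  classical
  rw [(restrictNeEquiv N (Classical.arbitrary ι)).finrank_eq, finrank_pi_fintype]
  simp

variable (ι N) in
lemma finite [Nonempty ι] [Module.Finite R N] : Module.Finite R (zeroSum ι N) := by
  classical exact .equiv (restrictNeEquiv N (Classical.arbitrary ι)).symm

end zeroSum

end ZeroSum

section EvaluationSection

variable {R M ι : Type*} [Ring R] [AddCommGroup M] [Module R M] [DecidableEq ι]

/-- If `T : M → (ι → M)` is a section of the evaluation at `i₁`, then `range T` is complementary to
the families vanishing at `i₁`; on the quotient this is `F ↦ (F i - T (F i₁) i)_{i ≠ i₁}`. -/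
def quotRangeEquivOfEvalSection (T : M →ₗ[R] (ι → M)) (i₁ : ι) (hT : ∀ z, T z i₁ = z) :
    ((ι → M) ⧸ LinearMap.range T) ≃ₗ[R] ({i // i ≠ i₁} → M) :=
  let deviation : (ι → M) →ₗ[R] (ι → M) := LinearMap.id - T ∘ₗ LinearMap.proj i₁
  let Φ : (ι → M) →ₗ[R] ({i // i ≠ i₁} → M) := LinearMap.funLeft R M Subtype.val ∘ₗ deviation
  have apply (F : ι → M) (i : {i // i ≠ i₁}) : Φ F i = F i - T (F i₁) i := rfl
  have ker_eq : LinearMap.range T = LinearMap.ker Φ := by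
    ext F
    constructor
    · rintro ⟨z, rfl⟩
      ext i
      simp [apply, hT]
    · intro h
      refine ⟨F i₁, funext fun i => ?_⟩
      obtain rfl | hi := eq_or_ne i i₁
      · exact hT _
      · exact (sub_eq_zero.1 (congrFun h ⟨i, hi⟩)).symm
  have surjective : Function.Surjective Φ := fun D => by
    refine ⟨fun i => if h : i = i₁ then 0 else D ⟨i, h⟩, funext fun i => ?_⟩
    simp [apply, i.2]
  (Submodule.quotEquivOfEq _ _ ker_eq).trans (Φ.quotKerEquivOfSurjective surjective)

/-- Modulo the image of a section `T` of the evaluation at `i₁`, a zero-sum family is normalised to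
vanish at `i₁`, and is then given by its arbitrary values away from a second index `i₀`. -/
def zeroSum.quotRangeEquiv [Fintype ι] {N : Submodule R M}
    (T : N →ₗ[R] zeroSum ι N) {i₀ i₁ : ι} (h : i₁ ≠ i₀) (hT : ∀ z, (T z).1 i₁ = z) :
    (zeroSum ι N ⧸ LinearMap.range T) ≃ₗ[R]
      ({i : {i // i ≠ i₀} // i ≠ ⟨i₁, h⟩} → N) :=
  let e := zeroSum.restrictNeEquiv N i₀
  (Submodule.Quotient.equiv _ _ e (LinearMap.range_comp T e.toLinearMap).symm).trans <|
    quotRangeEquivOfEvalSection (e.toLinearMap ∘ₗ T) ⟨i₁, h⟩ fun z => Subtype.ext (hT z)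

end EvaluationSection

section Translates

variable (R : Type*) {G : Type*} [Ring R] [Group G]

/-- The matrix of left translates of a function: its row at `a` is `b ↦ z (a⁻¹ * b)`. Its image
consists of the matrices that are invariant under the diagonal action of `G`. -/
def translates : (G → R) →ₗ[R] (G → G → R) where
  toFun z a b := z (a⁻¹ * b)
  map_add' _ _ := rfl
  map_smul' _ _ := rfl

@[simp]
lemma translates_apply (z : G → R) (a b : G) : translates R z a b = z (a⁻¹ * b) := rfl

variable [Fintype G]

lemma translates_mem_zeroSum {z : G → R} (hz : z ∈ zeroSum G (⊤ : Submodule R R)) :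
    translates R z ∈ zeroSum G (zeroSum G (⊤ : Submodule R R)) := by
  rw [zeroSum.mem_top_iff] at hz
  refine zeroSum.mem_iff.2 ⟨fun a => zeroSum.mem_top_iff.2 ?_, funext fun b => ?_⟩
  · exact (Equiv.sum_comp (Equiv.mulLeft a⁻¹) z).trans hz
  · rw [Finset.sum_apply]
    exact (((Equiv.inv G).trans (Equiv.mulRight b)).sum_comp z).trans hz

variable (G) in
/-- `translates` as a map from functions with sum zero to matrices with vanishing row and column
sums. -/
def zeroSumTranslates :
    zeroSum G (⊤ : Submodule R R) →ₗ[R] zeroSum G (zeroSum G (⊤ : Submodule R R)) :=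
  (translates R).restrict fun _ => translates_mem_zeroSum R

@[simp]
lemma coe_zeroSumTranslates_apply (z : zeroSum G (⊤ : Submodule R R)) :
    (zeroSumTranslates R G z : G → G → R) = translates R z := rfl

end Translates

section MatrixEntries

variable {R G H : Type*} [CommRing R] [Fintype G] [Fintype H]

variable (R G H) in
/-- The identification of `R[G × H]` with the matrices whose rows are indexed by `G` and whose
columns are indexed by `H`. -/
def entries : R[G × H] ≃ₗ[R] (G → H → R) :=
  MonoidAlgebra.coeffLinearEquiv R ≪≫ₗ Finsupp.linearEquivFunOnFinite R R (G × H) ≪≫ₗ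
    LinearEquiv.curry R R G H

lemma entries_apply (f : R[G × H]) (a : G) (b : H) : entries R G H f a b = f.coeff (a, b) := rfl

lemma eq_sum_entries_smul_of [Monoid G] [Monoid H] (f : R[G × H]) :
    f = ∑ a, ∑ b, entries R G H f a b • of R (G × H) (a, b) := by
  classical
  apply (entries R G H).injective
  ext a b
  simp [entries_apply, MonoidAlgebra.coeff_sum, Finsupp.single_apply, Prod.ext_iff, ite_and]

variable [Group G] [Group H]

lemma entries_mul_of (f : R[G × H]) (a c : G) (b d : H) :
    entries R G H (f * of R (G × H) (c, d)) a b = entries R G H f (a * c⁻¹) (b * d⁻¹) := by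
  simp [entries_apply]

lemma row_sum_entries_mul_of_sub_one (f : R[G × H]) (a : G) (h : H) :
    ∑ b, entries R G H (f * (of R (G × H) (1, h) - 1)) a b = 0 := by
  simp only [mul_sub, mul_one, map_sub, Pi.sub_apply, entries_mul_of, inv_one,
    Finset.sum_sub_distrib, sub_eq_zero]
  exact Equiv.sum_comp (Equiv.mulRight h⁻¹) (entries R G H f a)

lemma col_sum_entries_mul_of_sub_one (f : R[G × H]) (b : H) (g : G) :
    ∑ a, entries R G H (f * (of R (G × H) (g, 1) - 1)) a b = 0 := by
  simp only [mul_sub, mul_one, map_sub, Pi.sub_apply, entries_mul_of, inv_one,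
    Finset.sum_sub_distrib, sub_eq_zero]
  exact Equiv.sum_comp (Equiv.mulRight g⁻¹) (fun a => entries R G H f a b)

lemma eq_sum_entries_smul_of_sub_one_mul_of_sub_one {f : R[G × H]}
    (hf : entries R G H f ∈ zeroSum G (zeroSum H (⊤ : Submodule R R))) :
    f = ∑ a, ∑ b, entries R G H f a b •
      ((of R (G × H) (a, 1) - 1) * (of R (G × H) (1, b) - 1)) := by
  obtain ⟨hrow, hcol⟩ := zeroSum.mem_iff.1 hf
  simp only [zeroSum.mem_top_iff] at hrow
  have hrow_smul (u : G → R[G × H]) : ∑ a, ∑ b, entries R G H f a b • u a = 0 := by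
    simp only [← Finset.sum_smul, hrow, zero_smul, Finset.sum_const_zero]
  have hcol_smul (u : H → R[G × H]) : ∑ a, ∑ b, entries R G H f a b • u b = 0 := by
    rw [Finset.sum_comm]
    simp only [← Finset.sum_smul, ← Finset.sum_apply _ _ (entries R G H f), hcol, Pi.zero_apply,
      zero_smul, Finset.sum_const_zero]
  have expand (a : G) (b : H) :
      (of R (G × H) (a, 1) - 1) * (of R (G × H) (1, b) - 1) =
        of R (G × H) (a, b) - of R (G × H) (1, b) - (of R (G × H) (a, 1) - 1) := by
    rw [mul_sub_one, sub_one_mul, ← map_mul, Prod.mk_mul_mk, mul_one, one_mul]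
  simp only [expand, smul_sub, Finset.sum_sub_distrib, hcol_smul, hrow_smul, sub_zero]
  exact eq_sum_entries_smul_of f

end MatrixEntries

section CrossIdeal

variable {R G H : Type*} [CommRing R] [CommGroup G] [CommGroup H]

variable (R) in
/-- The ideal of `R[G × H]` generated by `(ε₀ - 1) * (ε₁ - 1)`, where `ε₀ = (g, 1)` and
`ε₁ = (1, h)`, regarded as an `R`-module. For `R = ℤ` and `G = H = μₙ` this is `A₁`. -/
def crossIdeal (g : G) (h : H) : Submodule R R[G × H] :=
  (Ideal.span {(of R (G × H) (g, 1) - 1) * (of R (G × H) (1, h) - 1)}).restrictScalars R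

lemma map_sub_one_dvd_map_sub_one {M S : Type*} [Monoid M] [CommRing S] (φ : M →* S) {g x : M}
    (hx : x ∈ Submonoid.powers g) : φ g - 1 ∣ φ x - 1 := by
  obtain ⟨k, rfl⟩ := hx
  simpa only [map_pow] using sub_one_dvd_pow_sub_one (φ g) k

theorem crossIdeal_eq_comap_zeroSum [Fintype G] [Fintype H] {g : G} {h : H}
    (hg : ∀ x, x ∈ Subgroup.zpowers g) (hh : ∀ x, x ∈ Subgroup.zpowers h) :
    crossIdeal R g h =
      (zeroSum G (zeroSum H (⊤ : Submodule R R))).comap (entries R G H).toLinearMap := by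
  apply le_antisymm
  · intro f hf
    obtain ⟨y, rfl⟩ := Ideal.mem_span_singleton'.1 hf
    refine zeroSum.mem_iff.2 ⟨fun a => zeroSum.mem_top_iff.2 ?_, funext fun b => ?_⟩
    · rw [← mul_assoc]
      exact row_sum_entries_mul_of_sub_one _ a h
    · rw [Finset.sum_apply, mul_comm (_ - 1), ← mul_assoc]
      exact col_sum_entries_mul_of_sub_one _ b g
  · intro f hf
    simp only [← mem_powers_iff_mem_zpowers] at hg hh
    rw [eq_sum_entries_smul_of_sub_one_mul_of_sub_one hf]
    refine sum_mem fun a _ => sum_mem fun b _ => Submodule.smul_mem _ _ ?_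
    exact Ideal.mem_span_singleton.2 <| mul_dvd_mul
      (map_sub_one_dvd_map_sub_one ((of R (G × H)).comp (.inl G H)) (hg a))
      (map_sub_one_dvd_map_sub_one ((of R (G × H)).comp (.inr G H)) (hh b))

end CrossIdeal

section GammaSpan

variable {R G : Type*}

theorem zeroSum_eq_span_single_sub_single [Ring R] [Group G] [Fintype G] [DecidableEq G] {g : G}
    (hg : ∀ x, x ∈ Subgroup.zpowers g) :
    zeroSum G (⊤ : Submodule R R) =
      Submodule.span R (Set.range fun x => Pi.single x 1 - Pi.single (x * g) 1) := by
  set D := Submodule.span R (Set.range fun x : G => (Pi.single x 1 - Pi.single (x * g) 1 : G → R))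
  apply le_antisymm
  · intro z hz
    have telescope (k : ℕ) : (Pi.single 1 1 - Pi.single (g ^ k) 1 : G → R) ∈ D := by
      induction k with
      | zero => simp
      | succ k ih =>
        rw [pow_succ, ← sub_add_sub_cancel]
        exact add_mem ih (Submodule.subset_span ⟨g ^ k, rfl⟩)
    have hz_eq : z = -∑ x, z x • (Pi.single 1 1 - Pi.single x 1 : G → R) := by
      rw [zeroSum.mem_top_iff] at hz
      simp only [smul_sub, Finset.sum_sub_distrib, ← Finset.sum_smul, hz, zero_smul, zero_sub,
        neg_neg]
      exact pi_eq_sum_univ' z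
    rw [hz_eq]
    refine neg_mem <| sum_mem fun x _ => Submodule.smul_mem _ _ ?_
    obtain ⟨k, rfl⟩ := mem_powers_iff_mem_zpowers.2 (hg x)
    exact telescope k
  · rw [Submodule.span_le]
    rintro _ ⟨x, rfl⟩
    exact zeroSum.mem_top_iff.2 (by simp)

variable [CommRing R] [CommGroup G] [Fintype G]

variable (R G) in
/-- The element `N` of `R[G × G]`: the sum of the diagonal of `G × G`. -/
def diagonalSum : R[G × G] := ∑ x : G, of R (G × G) (x, x)

variable (R) in
/-- The element `ε₀⁻ⁱ (1 - ε₁) N` for `x = gⁱ`, where `ε₀ = (g, 1)` and `ε₁ = (1, g)`. -/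
def gammaElement (g x : G) : R[G × G] :=
  of R (G × G) (x⁻¹, 1) * ((1 - of R (G × G) (1, g)) * diagonalSum R G)

variable (R) in
/-- The `R`-span of the elements `ε₀⁻ⁱ (1 - ε₁) N`. For `R = ℤ` and `G = μₙ` this is `S`. -/
def gammaSpan (g : G) : Submodule R R[G × G] :=
  Submodule.span R (Set.range (gammaElement R g))

lemma entries_diagonalSum [DecidableEq G] (a b : G) :
    entries R G G (diagonalSum R G) a b = if a = b then 1 else 0 := by
  simp [diagonalSum, entries_apply, MonoidAlgebra.coeff_sum, Finsupp.single_apply, Prod.ext_iff,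
    ite_and, eq_comm]

lemma entries_gammaElement [DecidableEq G] (g x : G) :
    entries R G G (gammaElement R g x) =
      translates R (Pi.single x 1 - Pi.single (x * g) 1) := by
  have hγ : gammaElement R g x = diagonalSum R G * of R (G × G) (x⁻¹, 1) -
      diagonalSum R G * of R (G × G) (x⁻¹, g) := by
    have hmul : of R (G × G) (x⁻¹, g) = of R (G × G) (x⁻¹, 1) * of R (G × G) (1, g) := by
      simp only [← map_mul, Prod.mk_mul_mk, mul_one, one_mul]
    rw [gammaElement, hmul]
    ring
  ext a b
  simp only [hγ, map_sub, Pi.sub_apply, entries_mul_of, entries_diagonalSum, translates_apply,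
    Pi.single_apply, eq_inv_mul_iff_mul_eq, eq_mul_inv_iff_mul_eq, inv_inv, inv_one, mul_one,
    mul_assoc, eq_comm]

theorem map_entries_gammaSpan {g : G} (hg : ∀ x, x ∈ Subgroup.zpowers g) :
    (gammaSpan R g).map (entries R G G).toLinearMap =
      (zeroSum G (⊤ : Submodule R R)).map (translates R) := by
  classical
  rw [gammaSpan, zeroSum_eq_span_single_sub_single hg, Submodule.map_span, Submodule.map_span,
    ← Set.range_comp, ← Set.range_comp]
  congr 2
  exact funext (entries_gammaElement g)

end GammaSpan

section CrossQuotient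

variable {R G : Type*} [CommRing R] [CommGroup G] [Fintype G] {g : G}

/-- The matrix picture of `A₁`: the isomorphism from `crossIdeal R g g` to the matrices with
vanishing row and column sums. -/
def crossIdealEquiv (hg : ∀ x, x ∈ Subgroup.zpowers g) :
    crossIdeal R g g ≃ₗ[R] zeroSum G (zeroSum G (⊤ : Submodule R R)) :=
  .ofEq _ _ (crossIdeal_eq_comap_zeroSum hg hg) ≪≫ₗ (entries R G G).ofSubmodule' _

theorem map_crossIdealEquiv_comap_gammaSpan (hg : ∀ x, x ∈ Subgroup.zpowers g) :
    ((gammaSpan R g).comap (crossIdeal R g g).subtype).map (crossIdealEquiv hg).toLinearMap =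
      LinearMap.range (zeroSumTranslates R G) := by
  have hS := map_entries_gammaSpan (R := R) hg
  ext F
  constructor
  · rintro ⟨f, hf, rfl⟩
    obtain ⟨z, hz, hzf⟩ := hS.le (Submodule.mem_map_of_mem hf)
    exact ⟨⟨z, hz⟩, Subtype.ext hzf⟩
  · rintro ⟨z, rfl⟩
    obtain ⟨f, hf, hfz⟩ := hS.ge (Submodule.mem_map_of_mem z.2)
    have hfA : f ∈ crossIdeal R g g := by
      rw [crossIdeal_eq_comap_zeroSum hg hg, Submodule.mem_comap, hfz]
      exact translates_mem_zeroSum R z.2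
    exact ⟨⟨f, hfA⟩, hf, Subtype.ext hfz⟩

variable (R) in
/-- The quotient `A₁ / S` for the group `G` generated by `g` and coefficients in `R`. -/
abbrev CrossQuotient (g : G) : Type _ :=
  crossIdeal R g g ⧸ (gammaSpan R g).comap (crossIdeal R g g).subtype

/-- The isomorphism from `A₁ / S` to the matrices with rows indexed by `G` without `1` and `i₀`, and
with vanishing row sums. -/
def crossQuotientEquiv [DecidableEq G] (hg : ∀ x, x ∈ Subgroup.zpowers g) {i₀ : G} (h : 1 ≠ i₀) :
    CrossQuotient R g ≃ₗ[R]
      ({i : {i // i ≠ i₀} // i ≠ ⟨1, h⟩} → zeroSum G (⊤ : Submodule R R)) :=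
  Submodule.Quotient.equiv _ _ (crossIdealEquiv hg) (map_crossIdealEquiv_comap_gammaSpan hg) ≪≫ₗ
    zeroSum.quotRangeEquiv (zeroSumTranslates R G) h fun z => funext fun b => by simp

theorem stmt_11_general [Nontrivial R] [Nontrivial G] (hg : ∀ x, x ∈ Subgroup.zpowers g) :
    Free R (CrossQuotient R g) ∧
      finrank R (CrossQuotient R g) = (Fintype.card G - 1) * (Fintype.card G - 2) := by
  classical
  obtain ⟨i₀, hi₀⟩ := exists_ne (1 : G)
  have : Free R (⊤ : Submodule R R) := .of_equiv Submodule.topEquiv.symm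
  have := zeroSum.free G (⊤ : Submodule R R)
  have := zeroSum.finite G (⊤ : Submodule R R)
  let e := crossQuotientEquiv (R := R) hg hi₀.symm
  refine ⟨.of_equiv e.symm, ?_⟩
  rw [e.finrank_eq, finrank_pi_fintype]
  simp [zeroSum.finrank_eq, Nat.sub_sub, mul_comm]

end CrossQuotient

section RootsOfUnity

lemma sum_range_orderOf_pow {G M : Type*} [Group G] [Fintype G] [AddCommMonoid M] {g : G}
    (hg : ∀ x, x ∈ Subgroup.zpowers g) (f : G → M) :
    ∑ k ∈ Finset.range (orderOf g), f (g ^ k) = ∑ x, f x := by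
  classical
  rw [← IsCyclic.image_range_orderOf hg, Finset.sum_image]
  simpa using pow_injOn_Iio_orderOf (x := g)

variable (n : ℕ) [NeZero n]

lemma mem_zpowers_ofAdd_one (x : Multiplicative (ZMod n)) :
    x ∈ Subgroup.zpowers (Multiplicative.ofAdd (1 : ZMod n)) :=
  mem_powers_iff_mem_zpowers.1 ⟨x.toAdd.val, by simp [← ofAdd_nsmul]⟩

lemma Nel_eq_diagonalSum : Nel n = diagonalSum ℤ (Multiplicative (ZMod n)) := by
  rw [Nel, diagonalSum, ← sum_range_orderOf_pow (mem_zpowers_ofAdd_one n),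
    orderOf_ofAdd_eq_addOrderOf, ZMod.addOrderOf_one]
  simp [eps0, eps1, g0, g1, MonoidAlgebra.single_pow, MonoidAlgebra.single_mul_single]

lemma gam_eq_gammaElement (i : ℤ) :
    gam n i = gammaElement ℤ (Multiplicative.ofAdd (1 : ZMod n)) (Multiplicative.ofAdd 1 ^ i) := by
  simp [gam, gammaElement, Nel_eq_diagonalSum, eps1, g0, g1]

lemma Sgam_eq_gammaSpan : Sgam n = gammaSpan ℤ (Multiplicative.ofAdd (1 : ZMod n)) := by
  rw [Sgam, gammaSpan]
  congr 1
  ext f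
  constructor
  · rintro ⟨i, -, rfl⟩
    exact ⟨_, (gam_eq_gammaElement n i).symm⟩
  · rintro ⟨x, rfl⟩
    refine ⟨x.toAdd.val, x.toAdd.val_lt, ?_⟩
    rw [gam_eq_gammaElement, zpow_natCast, ← ofAdd_nsmul]
    simp

end RootsOfUnity

/-- the quotient `A₁/S` is a free `ℤ`-module of rank `(n−1)(n−2)`. -/
theorem stmt_11 (n : ℕ) (hn : 3 ≤ n) :
    Module.Free ℤ (A1Z n ⧸ SgamInA1 n) ∧
      Module.finrank ℤ (A1Z n ⧸ SgamInA1 n) = (n - 1) * (n - 2) := by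
  have : NeZero n := ⟨by omega⟩
  have : Fact (1 < n) := ⟨by omega⟩
  have main := stmt_11_general (R := ℤ) (mem_zpowers_ofAdd_one n)
  rw [Fintype.card_multiplicative, ZMod.card] at main
  rw [SgamInA1, Sgam_eq_gammaSpan]
  exact main
end
end

section
/- Multiplication by ε₀ (respectively by ε₁) is a ℤ-linear automorphism of the ideal A₁ and hence induces a ℤ-linear automorphism of ∧²_ℤ A₁ sending a ∧ b to (ε₀·a) ∧ (ε₀·b) (respectively (ε₁·a) ∧ (ε₁·b)). Both (ε₀·Δ) − Δ and (ε₁·Δ) − Δ lie in the submodule S ∧ A₁ of ∧²_ℤ A₁; equivalently, the image of Δ in ∧²_ℤ(A₁/S) is invariant under the actions induced by multiplication by ε₀ and by ε₁. -/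
noncomputable section

/-- `E_{i,j} = (1 − ε₀^i)(1 − ε₁^j) ∈ Λ`. -/
def Ee (n : ℕ) (i j : ℕ) : Lam n := (1 - eps0 n ^ i) * (1 - eps1 n ^ j)

lemma Ee_mem (n i j : ℕ) : Ee n i j ∈ A1 n := by
  rw [A1, Ideal.mem_span_singleton]
  have h : (eps0 n - 1) * (eps1 n - 1) = (1 - eps0 n) * (1 - eps1 n) := by ring
  rw [h, Ee]
  exact mul_dvd_mul (one_sub_dvd_one_sub_pow _ i) (one_sub_dvd_one_sub_pow _ j)

/-- `E_{i,j}` as an element of the `ℤ`-module `A₁`. -/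
def ESub (n i j : ℕ) : A1Z n := ⟨Ee n i j, Ee_mem n i j⟩

/-- The second exterior power `⋀²_ℤ M` of a `ℤ`-module `M`, as a submodule of the
exterior algebra. -/
abbrev Wedge2 (M : Type*) [AddCommGroup M] [Module ℤ M] : Submodule ℤ (ExteriorAlgebra ℤ M) :=
  ⋀[ℤ]^2 M

/-- The wedge `a ∧ b` of two elements of a `ℤ`-module `M`, as an element of `⋀²_ℤ M`. -/
def wedge {M : Type*} [AddCommGroup M] [Module ℤ M] (a b : M) : Wedge2 M :=
  ⟨ExteriorAlgebra.ιMulti ℤ 2 ![a, b], ExteriorAlgebra.ιMulti_range ℤ 2 ⟨![a, b], rfl⟩⟩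

/-- The coefficient `ε(i₁,j₁,i₂,j₂) ∈ {1, −1, 0}`:
`1` if `j₂−j₁ ≡ i₂−i₁ ≢ 0 (mod n−1)`, `−1` if `j₂−j₁+1 ≡ i₂−i₁ ≢ 0 (mod n−1)`,
and `0` otherwise. -/
def epsCoef (n : ℕ) (i1 j1 i2 j2 : ℤ) : ℤ :=
  if Int.ModEq ((n : ℤ) - 1) (j2 - j1) (i2 - i1) ∧ ¬ Int.ModEq ((n : ℤ) - 1) (i2 - i1) 0
    then 1
  else if Int.ModEq ((n : ℤ) - 1) (j2 - j1 + 1) (i2 - i1) ∧ ¬ Int.ModEq ((n : ℤ) - 1) (i2 - i1) 0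
    then -1
  else 0

/-- The index set `I`, encoded as pairs `((i₁,j₁),(i₂,j₂))` of pairs of natural numbers
with `1 ≤ i₁ ≤ i₂ ≤ n−1`, `1 ≤ j₁, j₂ ≤ n−1` and `(i₁,j₁) ≠ (i₂,j₂)`. -/
def IFinset (n : ℕ) : Finset ((ℕ × ℕ) × (ℕ × ℕ)) :=
  ((Finset.Icc 1 (n - 1) ×ˢ Finset.Icc 1 (n - 1)) ×ˢ
    (Finset.Icc 1 (n - 1) ×ˢ Finset.Icc 1 (n - 1))).filter
    fun q => q.1.1 ≤ q.2.1 ∧ q.1 ≠ q.2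

/-- `Δ = ∑_{(i₁,j₁,i₂,j₂) ∈ I} ε(i₁,j₁,i₂,j₂) · E_{i₁,j₁} ∧ E_{i₂,j₂} ∈ ⋀²_ℤ A₁`. -/
def Delta (n : ℕ) : Wedge2 ↥(A1Z n) :=
  ∑ q ∈ IFinset n,
    epsCoef n (q.1.1 : ℤ) (q.1.2 : ℤ) (q.2.1 : ℤ) (q.2.2 : ℤ) •
      wedge (ESub n q.1.1 q.1.2) (ESub n q.2.1 q.2.2)

/-- The `ℤ`-submodule `S ∧ A₁` of `⋀²_ℤ A₁`, generated by the wedges `s ∧ a` with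
`s ∈ S` and `a ∈ A₁`. -/
def SwedgeA1 (n : ℕ) : Submodule ℤ ↥(Wedge2 ↥(A1Z n)) :=
  Submodule.span ℤ {x : Wedge2 ↥(A1Z n) |
    ∃ s a : ↥(A1Z n), (s : Lam n) ∈ Sgam n ∧ x = wedge s a}

/-!
Put `m = n - 1`. For each `i`, the row `E_i = (E_{i,1}, …, E_{i,m})` is indexed by `ℤ/m`, and
`Δ = ∑_{0 ≤ i < k < n} T_{k-i}(E_i, E_k)`, where `T_r` is the difference of the cyclic
cross-correlations (for the wedge product) at lags `r` and `r - 1`.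

Telescoping in the lag shows that this sum does not change when one fixed row is subtracted from
every `E_i`. Since the wedge is alternating, `T_{1-r}(y, x) = T_r(x, y)`; as `n ≡ 1` modulo `m` and
`E_n = E_0`, the sum is also invariant under cyclic rotation of the rows. Now
`ε₀ E_i = E_{i+1} - E_1`, so `ε₀ Δ = Δ` exactly.

Multiplication by `ε₁` replaces the entry `E_{i,1}` of each row by `0`, shifts the positions by one
and subtracts the constant row `E_{i,1}`. Shifts and constant rows do not affect `T_r`, so only the
replaced entry matters: the term of the pair `(i, k)` changes by two wedges, exchanged by
swapping `i` and `k`. Altogether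
`ε₁ Δ - Δ = ∑_k (∑_i (E_{i,i-k+1} - E_{i,i-k})) ∧ E_{k,1} = -∑_k γ_{-k} ∧ E_{k,1}`.
-/

open Finset Function

lemma update_zero_eq_sub_single {ι A : Type*} [DecidableEq ι] [AddGroup A] (x : ι → A) (i : ι) :
    update x i 0 = x - Pi.single i (x i) := by
  ext j
  rcases eq_or_ne j i with rfl | hj <;> simp [*]

section CrossCorrelation

variable {R G M N P : Type*} [CommRing R] [Fintype G]
variable [AddCommGroup M] [Module R M] [AddCommGroup N] [Module R N] [AddCommGroup P] [Module R P]

/-- The cross-correlation at lag `r` of two families indexed by a finite group,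
`(x, y) ↦ ∑ j, w (x j) (y (j + r))`. -/
def crossCorr [AddCommGroup G] (w : M →ₗ[R] N →ₗ[R] P) (r : G) :
    (G → M) →ₗ[R] (G → N) →ₗ[R] P :=
  ∑ j, w.compl₁₂ (LinearMap.proj j) (LinearMap.proj (j + r))

/-- The backward difference in the lag of the cross-correlation. -/
def crossCorrStep [AddCommGroupWithOne G] (w : M →ₗ[R] N →ₗ[R] P) (r : G) :
    (G → M) →ₗ[R] (G → N) →ₗ[R] P :=
  crossCorr w r - crossCorr w (r - 1)

section Bilinear

variable [AddCommGroup G] (w : M →ₗ[R] N →ₗ[R] P)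

lemma crossCorr_apply (r : G) (x : G → M) (y : G → N) :
    crossCorr w r x y = ∑ j, w (x j) (y (j + r)) := by
  simp [crossCorr]

lemma crossCorr_const_left (r : G) (c : M) (y : G → N) :
    crossCorr w r (const G c) y = w c (∑ j, y j) := by
  simp only [crossCorr_apply, const_apply, map_sum]
  exact Equiv.sum_comp (Equiv.addRight r) fun j => w c (y j)

lemma crossCorr_const_right (r : G) (x : G → M) (c : N) :
    crossCorr w r x (const G c) = w (∑ j, x j) c := by
  simp [crossCorr_apply]

lemma crossCorr_shift (r : G) (x : G → M) (y : G → N) (s : G) :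
    crossCorr w r (fun j => x (j + s)) (fun j => y (j + s)) = crossCorr w r x y := by
  simp only [crossCorr_apply, add_right_comm _ r s]
  exact Equiv.sum_comp (Equiv.addRight s) fun j => w (x j) (y (j + r))

lemma crossCorr_single_left [DecidableEq G] (r : G) (c : M) (y : G → N) :
    crossCorr w r (Pi.single 0 c) y = w c (y r) := by
  rw [crossCorr_apply, sum_eq_single 0 (by simp +contextual) (by simp)]
  simp

lemma crossCorr_single_right [DecidableEq G] (r : G) (x : G → M) (c : N) :
    crossCorr w r x (Pi.single 0 c) = w (x (-r)) c := by
  rw [crossCorr_apply, sum_eq_single (-r) _ (by simp)]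
  · simp
  · intro j _ hj
    simp [show j + r ≠ 0 from mt eq_neg_of_add_eq_zero_left hj]

lemma sum_crossCorr (x : G → M) (y : G → N) :
    ∑ r, crossCorr w r x y = w (∑ j, x j) (∑ j, y j) := by
  simp only [crossCorr_apply]
  rw [sum_comm, map_sum w, LinearMap.sum_apply]
  refine sum_congr rfl fun j _ => ?_
  rw [map_sum]
  exact Equiv.sum_comp (Equiv.addLeft j) fun k => w (x j) (y k)

end Bilinear

section BilinearStep

variable [AddCommGroupWithOne G] (w : M →ₗ[R] N →ₗ[R] P)

lemma crossCorrStep_apply (r : G) (x : G → M) (y : G → N) :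
    crossCorrStep w r x y = crossCorr w r x y - crossCorr w (r - 1) x y :=
  rfl

lemma crossCorrStep_sub_const (r : G) (x : G → M) (y : G → N) (c : M) (d : N) :
    crossCorrStep w r (x - const G c) (y - const G d) = crossCorrStep w r x y := by
  simp [crossCorrStep_apply, crossCorr_const_left, crossCorr_const_right]

lemma crossCorrStep_shift (r : G) (x : G → M) (y : G → N) (s : G) :
    crossCorrStep w r (fun j => x (j + s)) (fun j => y (j + s)) = crossCorrStep w r x y := by
  simp only [crossCorrStep_apply, crossCorr_shift]

lemma crossCorrStep_update_zero [DecidableEq G] (r : G) (x : G → M) (y : G → N) :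
    crossCorrStep w r (update x 0 0) (update y 0 0) = crossCorrStep w r x y
      - w (x 0) (y r - y (r - 1)) - w (update x 0 0 (-r) - update x 0 0 (1 - r)) (y 0) := by
  have left_removed : crossCorrStep w r (update x 0 0) y
      = crossCorrStep w r x y - w (x 0) (y r - y (r - 1)) := by
    rw [update_zero_eq_sub_single x, map_sub, LinearMap.sub_apply,
      crossCorrStep_apply w r (Pi.single 0 (x 0)), crossCorr_single_left, crossCorr_single_left,
      map_sub]
  rw [update_zero_eq_sub_single y, map_sub, left_removed, crossCorrStep_apply w r (update x 0 0),
    crossCorr_single_right, crossCorr_single_right, neg_sub, map_sub w, LinearMap.sub_apply]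

lemma crossCorrStep_update_zero_shift_sub_const [DecidableEq G] (r s : G) (x : G → M) (y : G → N)
    (c : M) (d : N) :
    crossCorrStep w r (fun j => update x 0 0 (j + s) - c) (fun j => update y 0 0 (j + s) - d)
      = crossCorrStep w r x y - w (x 0) (y r - y (r - 1))
        - w (update x 0 0 (-r) - update x 0 0 (1 - r)) (y 0) := by
  rw [← crossCorrStep_update_zero]
  exact (crossCorrStep_sub_const w r _ _ c d).trans (crossCorrStep_shift w r _ _ s)

end BilinearStep

section Alternating

variable {w : M →ₗ[R] M →ₗ[R] P}

lemma crossCorr_zero_self [AddCommGroup G] (hw : w.IsAlt) (x : G → M) :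
    crossCorr w 0 x x = 0 := by
  simp [crossCorr_apply, hw _]

lemma neg_crossCorr_swap [AddCommGroup G] (hw : w.IsAlt) (r : G) (x y : G → M) :
    -crossCorr w (-r) y x = crossCorr w r x y := by
  rw [crossCorr_apply, crossCorr_apply, ← sum_neg_distrib, ← Equiv.sum_comp (Equiv.addRight r)]
  simp [hw.neg]

lemma crossCorrStep_swap [AddCommGroupWithOne G] (hw : w.IsAlt) (r : G) (x y : G → M) :
    crossCorrStep w (1 - r) y x = crossCorrStep w r x y := by
  rw [crossCorrStep_apply, crossCorrStep_apply, ← neg_crossCorr_swap hw r x y,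
    ← neg_crossCorr_swap hw (r - 1) x y]
  simp only [neg_sub, sub_sub_cancel_left]
  abel

end Alternating

end CrossCorrelation

lemma sum_range_eq_sum_zmod {A : Type*} [AddCommMonoid A] (m : ℕ) [NeZero m] (f : ZMod m → A) :
    ∑ k ∈ range m, f k = ∑ r, f r := by
  refine sum_nbij' (fun k : ℕ => (k : ZMod m)) ZMod.val ?_ ?_ ?_ ?_ ?_ <;>
    simp +contextual [ZMod.val_lt, Nat.mod_eq_of_lt]

section TriangleSum

variable {R G M P : Type*} [CommRing R] [Fintype G] [AddCommGroupWithOne G]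
variable [AddCommGroup M] [Module R M] [AddCommGroup P] [Module R P]

/-- The sum, over the pairs `i < k < n` of rows of `X`, of the cross-correlation step of the rows
`X i` and `X k` at lag `k - i`. The element `Δ` is of this shape. -/
def triangleSum (w : M →ₗ[R] M →ₗ[R] P) (n : ℕ) (X : ℕ → G → M) : P :=
  ∑ k ∈ range n, ∑ i ∈ range k, crossCorrStep w ((k : G) - (i : G)) (X i) (X k)

lemma map_triangleSum {w : M →ₗ[R] M →ₗ[R] P} {f : M → M} {F : P →ₗ[R] P}
    (hF : ∀ x y, F (w x y) = w (f x) (f y)) (n : ℕ) (X : ℕ → G → M) :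
    F (triangleSum w n X) = triangleSum w n fun i j => f (X i j) := by
  simp only [triangleSum, crossCorrStep_apply, crossCorr_apply, map_sum, map_sub, hF]

variable {w : M →ₗ[R] M →ₗ[R] P}

lemma triangleSum_rotate (hw : w.IsAlt) {n : ℕ} (hn : (n : G) = 1) {X : ℕ → G → M}
    (hX : X n = X 0) : triangleSum w n (fun i => X (i + 1)) = triangleSum w n X := by
  let f (k i : ℕ) : P := crossCorrStep w ((k : G) - (i : G)) (X i) (X k)
  have last_row (i : ℕ) : f n i = f i 0 := by
    simp only [f, hn, hX, Nat.cast_zero, sub_zero, crossCorrStep_swap hw]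
  have first_column : ∑ k ∈ range n, f (k + 1) 0 = ∑ k ∈ range n, f k 0 := by
    have corners : f n 0 = f 0 0 := last_row 0
    rw [← add_left_inj (f 0 0), ← sum_range_succ' (f · 0), sum_range_succ, corners]
  have peel_first : ∑ k ∈ range (n + 1), ∑ i ∈ range k, f k i
      = triangleSum w n (fun i => X (i + 1)) + ∑ k ∈ range n, f (k + 1) 0 := by
    simp [sum_range_succ', sum_add_distrib, triangleSum, f]
  have peel_last : ∑ k ∈ range (n + 1), ∑ i ∈ range k, f k i
      = triangleSum w n X + ∑ k ∈ range n, f k 0 := by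
    simp only [sum_range_succ, last_row]
    rfl
  exact add_right_cancel (peel_first.symm.trans (peel_last.trans (by rw [first_column])))

end TriangleSum

section Translation

variable {R M P : Type*} [CommRing R] {m : ℕ} [NeZero m]
variable [AddCommGroup M] [Module R M] [AddCommGroup P] [Module R P] {w : M →ₗ[R] M →ₗ[R] P}

lemma sum_range_crossCorrStep (w : M →ₗ[R] M →ₗ[R] P) (k : ℕ) (x y : ZMod m → M) :
    ∑ i ∈ range k, crossCorrStep w ((k : ZMod m) - (i : ZMod m)) x y
      = crossCorr w (k : ZMod m) x y - crossCorr w 0 x y := by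
  simpa [crossCorrStep_apply, sub_sub] using
    sum_range_sub' (fun i => crossCorr w ((k : ZMod m) - (i : ZMod m)) x y) k

lemma sum_Ico_crossCorrStep (w : M →ₗ[R] M →ₗ[R] P) {i : ℕ} (hi : i ≤ m) (x y : ZMod m → M) :
    ∑ k ∈ Ico (i + 1) (m + 1), crossCorrStep w ((k : ZMod m) - (i : ZMod m)) x y
      = crossCorr w (-(i : ZMod m)) x y - crossCorr w 0 x y := by
  rw [← sum_Ico_add']
  simpa [crossCorrStep_apply, add_sub_right_comm _ (1 : ZMod m)] using
    sum_Ico_sub (fun k => crossCorr w ((k : ZMod m) - (i : ZMod m)) x y) hi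

lemma triangleSum_const (hw : w.IsAlt) (c : ZMod m → M) :
    triangleSum w (m + 1) (fun _ => c) = 0 := by
  simp only [triangleSum, sum_range_crossCorrStep, crossCorr_zero_self hw, sub_zero, sum_range_succ,
    sum_range_eq_sum_zmod m fun r => crossCorr w r c c, sum_crossCorr, hw _, CharP.cast_eq_zero,
    add_zero]

lemma sum_crossCorrStep_fixed_right (hw : w.IsAlt) (X : ℕ → ZMod m → M) (c : ZMod m → M) :
    ∑ k ∈ range (m + 1), ∑ i ∈ range k, crossCorrStep w ((k : ZMod m) - (i : ZMod m)) (X i) c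
      = -∑ i ∈ range (m + 1), (crossCorr w (i : ZMod m) c (X i) - crossCorr w 0 c (X i)) := by
  rw [sum_comm' (t' := range (m + 1)) (s' := fun i => Ico (i + 1) (m + 1))
    (by intro k i; simp only [mem_range, mem_Ico]; lia), ← sum_neg_distrib]
  refine sum_congr rfl fun i hi => ?_
  rw [sum_Ico_crossCorrStep w (mem_range_succ_iff.mp hi), ← neg_crossCorr_swap hw _ c,
    ← neg_crossCorr_swap hw 0 c, neg_zero]
  abel

lemma triangleSum_sub_const (hw : w.IsAlt) (X : ℕ → ZMod m → M) (c : ZMod m → M) :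
    triangleSum w (m + 1) (fun i => X i - c) = triangleSum w (m + 1) X := by
  have fixed_left : ∑ k ∈ range (m + 1), ∑ i ∈ range k,
      crossCorrStep w ((k : ZMod m) - (i : ZMod m)) c (X k)
        = ∑ k ∈ range (m + 1), (crossCorr w (k : ZMod m) c (X k) - crossCorr w 0 c (X k)) :=
    sum_congr rfl fun k _ => sum_range_crossCorrStep w k c (X k)
  have both_fixed : ∑ k ∈ range (m + 1), ∑ i ∈ range k,
      crossCorrStep w ((k : ZMod m) - (i : ZMod m)) c c = 0 := triangleSum_const hw c
  simp only [triangleSum, map_sub, LinearMap.sub_apply, sum_sub_distrib]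
  rw [fixed_left, both_fixed, sum_crossCorrStep_fixed_right hw]
  abel

end Translation

lemma sum_range_sum_range_add_swap {A : Type*} [AddCommMonoid A] {f : ℕ → ℕ → A}
    (hf : ∀ i, f i i = 0) (n : ℕ) :
    ∑ k ∈ range n, ∑ i ∈ range k, (f i k + f k i) = ∑ k ∈ range n, ∑ i ∈ range n, f i k := by
  induction n with
  | zero => simp
  | succ n ih =>
    rw [sum_range_succ, ih]
    simp only [sum_range_succ, sum_add_distrib, hf, add_zero, add_assoc]

section ExteriorSquare

variable {M : Type*} [AddCommGroup M]

lemma coe_wedge (a b : M) :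
    (wedge a b : ExteriorAlgebra ℤ M) = ExteriorAlgebra.ι ℤ a * ExteriorAlgebra.ι ℤ b := by
  simp [wedge, ExteriorAlgebra.ιMulti_apply]

variable (M) in
/-- The wedge product `M × M → ⋀²M` as a bilinear map. -/
def wedgeBilin : M →ₗ[ℤ] M →ₗ[ℤ] Wedge2 M :=
  LinearMap.mk₂ ℤ wedge
    (fun a b c => Subtype.ext (by simp [coe_wedge, add_mul]))
    (fun r a b => Subtype.ext (by
      simp only [coe_wedge, map_smul, smul_mul_assoc, Submodule.coe_smul]))
    (fun a b c => Subtype.ext (by simp [coe_wedge, mul_add]))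
    (fun r a b => Subtype.ext (by
      simp only [coe_wedge, map_smul, mul_smul_comm, Submodule.coe_smul]))

lemma wedgeBilin_apply (a b : M) : wedgeBilin M a b = wedge a b := rfl

lemma wedgeBilin_isAlt : (wedgeBilin M).IsAlt := fun a =>
  Subtype.ext (by simp [wedgeBilin_apply, coe_wedge])

/-- The automorphism of `⋀²M` induced by an automorphism of `M`. -/
def wedge2Equiv (f : M ≃ₗ[ℤ] M) : Wedge2 M ≃ₗ[ℤ] Wedge2 M :=
  LinearEquiv.ofLinearMap (exteriorPower.map 2 f.toLinearMap)
    (exteriorPower.map 2 f.symm.toLinearMap)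
    (by rw [← exteriorPower.map_comp]; simp) (by rw [← exteriorPower.map_comp]; simp)

lemma wedge2Equiv_wedge (f : M ≃ₗ[ℤ] M) (a b : M) :
    wedge2Equiv f (wedge a b) = wedge (f a) (f b) :=
  (exteriorPower.map_apply_ιMulti f.toLinearMap ![a, b]).trans
    (congrArg _ (by ext i; fin_cases i <;> rfl))

end ExteriorSquare

section GroupRing

variable {n : ℕ}

variable (n) in
lemma g0_pow_self : g0 n ^ n = 1 := by
  ext <;> simp [g0, ← ofAdd_nsmul]

variable (n) in
lemma g1_pow_self : g1 n ^ n = 1 := by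
  ext <;> simp [g1, ← ofAdd_nsmul]

variable (n) in
lemma eps0_pow_self : eps0 n ^ n = 1 := by
  rw [eps0, ← map_pow, g0_pow_self, map_one]

variable (n) in
lemma eps1_pow_self : eps1 n ^ n = 1 := by
  rw [eps1, ← map_pow, g1_pow_self, map_one]

lemma of_g1_zpow_natCast (k : ℕ) : MonoidAlgebra.of ℤ (MuMu n) (g1 n ^ (k : ℤ)) = eps1 n ^ k := by
  rw [zpow_natCast, map_pow, eps1]

variable (n) in
lemma Nel_eq_geom_sum : Nel n = ∑ k ∈ range n, (eps0 n * eps1 n) ^ k := by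
  simp only [Nel, mul_pow]

lemma pow_mul_Nel (k : ℕ) : (eps0 n * eps1 n) ^ k * Nel n = Nel n := by
  induction k with
  | zero => simp
  | succ k ih =>
    have telescope := mul_neg_geom_sum (eps0 n * eps1 n) n
    rw [← Nel_eq_geom_sum, mul_pow, eps0_pow_self, eps1_pow_self] at telescope
    linear_combination ih - (eps0 n * eps1 n) ^ k * telescope

lemma gam_mem_Sgam [NeZero n] (i : ℤ) : gam n i ∈ Sgam n := by
  have hn : (0 : ℤ) < n := mod_cast NeZero.pos n
  refine Submodule.subset_span ⟨(i % n).toNat, ?_, ?_⟩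
  · rw [Int.toNat_lt (Int.emod_nonneg _ hn.ne')]
    exact Int.emod_lt_of_pos _ hn
  · rw [gam, gam, Int.toNat_of_nonneg (Int.emod_nonneg _ hn.ne'), zpow_neg, zpow_neg,
      zpow_eq_zpow_emod' i (g0_pow_self n)]

/-- Multiplication by a unit of `Λ` as an automorphism of `A₁`. -/
def unitMulA1 (u : (Lam n)ˣ) : A1Z n ≃ₗ[ℤ] A1Z n :=
  DistribMulAction.toLinearEquiv ℤ (A1Z n) u

lemma coe_unitMulA1 (u : (Lam n)ˣ) (x : A1Z n) : (unitMulA1 u x : Lam n) = u * x := rfl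

lemma coe_ESub (i j : ℕ) : (ESub n i j : Lam n) = (1 - eps0 n ^ i) * (1 - eps1 n ^ j) := rfl

/-- The difference `E_{i,s+1} - E_{i,s}` for an exponent `s ∈ ℤ`. -/
def EStep (n i : ℕ) (s : ℤ) : A1Z n :=
  ⟨(1 - eps0 n ^ i) * (MonoidAlgebra.of ℤ (MuMu n) (g1 n ^ s) * (1 - eps1 n)), by
    have h := (A1 n).mul_mem_left (MonoidAlgebra.of ℤ (MuMu n) (g1 n ^ s)) (Ee_mem n i 1)
    rwa [Ee, pow_one, mul_left_comm] at h⟩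

lemma coe_EStep (i : ℕ) (s : ℤ) : (EStep n i s : Lam n)
    = (1 - eps0 n ^ i) * (MonoidAlgebra.of ℤ (MuMu n) (g1 n ^ s) * (1 - eps1 n)) := rfl

lemma ESub_succ_sub (i k : ℕ) : ESub n i (k + 1) - ESub n i k = EStep n i k := by
  apply Subtype.ext
  simp only [AddSubgroupClass.coe_sub, coe_ESub, coe_EStep, of_g1_zpow_natCast]
  ring

lemma EStep_add_self (i : ℕ) (s : ℤ) : EStep n i (s + n) = EStep n i s := by
  simp only [EStep, zpow_add, zpow_natCast, g1_pow_self, mul_one]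

lemma EStep_zero (i : ℕ) : EStep n i 0 = ESub n i 1 := by
  apply Subtype.ext
  simp only [coe_EStep, coe_ESub, zpow_zero, map_one, one_mul, pow_one]

lemma EStep_zero_left (s : ℤ) : EStep n 0 s = 0 := by
  apply Subtype.ext
  simp [coe_EStep]

lemma sum_EStep (b : ℕ) :
    ((∑ a ∈ range n, EStep n a (a - b) : A1Z n) : Lam n) = -gam n (-b) := by
  obtain ⟨yinv, hyinv⟩ : ∃ z, z = MonoidAlgebra.of ℤ (MuMu n) (g1 n ^ (-b : ℤ)) := ⟨_, rfl⟩
  have yinv_mul : yinv * eps1 n ^ b = 1 := by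
    rw [hyinv, ← of_g1_zpow_natCast, ← map_mul, ← zpow_add, neg_add_cancel, zpow_zero, map_one]
  have factored : ((∑ a ∈ range n, EStep n a (a - b) : A1Z n) : Lam n)
      = yinv * (1 - eps1 n) * (∑ a ∈ range n, eps1 n ^ a - Nel n) := by
    rw [AddSubmonoidClass.coe_finsetSum, Nel, ← sum_sub_distrib, mul_sum]
    refine sum_congr rfl fun a _ => ?_
    rw [coe_EStep, sub_eq_add_neg (a : ℤ), zpow_add, map_mul, of_g1_zpow_natCast, ← hyinv]
    ring
  have geometric_sum : (1 - eps1 n) * ∑ a ∈ range n, eps1 n ^ a = 0 := by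
    rw [mul_neg_geom_sum, eps1_pow_self, sub_self]
  have shift_diagonal : eps0 n ^ b * eps1 n ^ b * Nel n = Nel n := by
    rw [← mul_pow, pow_mul_Nel]
  rw [factored, gam, neg_neg, zpow_natCast, map_pow, ← eps0]
  linear_combination yinv * geometric_sum - eps0 n ^ b * (1 - eps1 n) * Nel n * yinv_mul
    + yinv * (1 - eps1 n) * shift_diagonal

end GroupRing

section Delta

variable {m : ℕ}

lemma epsCoef_eq_ite (i₁ j₁ i₂ j₂ : ℤ) :
    epsCoef (m + 1) i₁ j₁ i₂ j₂ =
      if (i₁ : ZMod m) = i₂ then 0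
      else (if (j₂ : ZMod m) = j₁ + (i₂ - i₁) then 1 else 0)
        - (if (j₂ : ZMod m) = j₁ + (i₂ - i₁ - 1) then 1 else 0) := by
  have same_row : i₂ - i₁ ≡ 0 [ZMOD m] ↔ (i₁ : ZMod m) = i₂ := by
    rw [← ZMod.intCast_eq_intCast_iff]
    grind
  have first_case : j₂ - j₁ ≡ i₂ - i₁ [ZMOD m] ↔ (j₂ : ZMod m) = j₁ + (i₂ - i₁) := by
    rw [← ZMod.intCast_eq_intCast_iff]
    grind
  have second_case : j₂ - j₁ + 1 ≡ i₂ - i₁ [ZMOD m] ↔ (j₂ : ZMod m) = j₁ + (i₂ - i₁ - 1) := by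
    rw [← ZMod.intCast_eq_intCast_iff]
    grind
  have exclusive (h₁ : (j₂ : ZMod m) = j₁ + (i₂ - i₁)) (h₂ : (j₂ : ZMod m) = j₁ + (i₂ - i₁ - 1)) :
      (i₁ : ZMod m) = i₂ :=
    eq_of_zero_eq_one (by linear_combination h₁ - h₂) _ _
  rw [epsCoef, Nat.cast_add_one, add_sub_cancel_right]
  simp only [same_row, first_case, second_case]
  grind

lemma ESub_zero_left (j : ℕ) : ESub (m + 1) 0 j = 0 := by
  apply Subtype.ext
  simp [coe_ESub]

lemma ESub_self_left (j : ℕ) : ESub (m + 1) (m + 1) j = 0 := by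
  apply Subtype.ext
  simp [coe_ESub, eps0_pow_self]

lemma ESub_self_right (i : ℕ) : ESub (m + 1) i (m + 1) = 0 := by
  apply Subtype.ext
  simp [coe_ESub, eps1_pow_self]

variable (m) in
/-- The row `(E_{i,1}, …, E_{i,n-1})`, where `n = m + 1`, as a family indexed by `ℤ/(n-1)`: position
`j` holds `E_{i,j+1}`. -/
def ERow (i : ℕ) (j : ZMod m) : A1Z (m + 1) := ESub (m + 1) i (j.val + 1)

lemma ERow_zero : ERow m 0 = 0 := funext fun _ => ESub_zero_left _

lemma ERow_self : ERow m (m + 1) = 0 := funext fun _ => ESub_self_left _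

lemma ERow_natCast {k : ℕ} (i : ℕ) (hk : k < m) : ERow m i k = ESub (m + 1) i (k + 1) := by
  rw [ERow, ZMod.val_cast_of_lt hk]

lemma ERow_natCast_sub_pred (k : ℕ) {r : ℕ} (hr : 1 ≤ r) (hrm : r < m) :
    ERow m k r - ERow m k (r - 1) = EStep (m + 1) k r := by
  rw [← Nat.cast_pred hr, ERow_natCast k hrm, ERow_natCast k (by lia), Nat.sub_add_cancel hr,
    ESub_succ_sub]

lemma ERow_apply_zero (i : ℕ) : ERow m i 0 = ESub (m + 1) i 1 := by
  simp [ERow]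

lemma unitMulA1_ERow_of_eq_eps0 {u : (Lam (m + 1))ˣ} (hu : (u : Lam (m + 1)) = eps0 (m + 1)) (i : ℕ)
    (j : ZMod m) : unitMulA1 u (ERow m i j) = ERow m (i + 1) j - ERow m 1 j := by
  apply Subtype.ext
  simp only [coe_unitMulA1, hu, AddSubgroupClass.coe_sub, ERow, coe_ESub]
  ring

variable [NeZero m]

lemma sum_Icc_one_eq_sum_zmod {A : Type*} [AddCommMonoid A] (f : ℕ → A) :
    ∑ j ∈ Icc 1 m, f j = ∑ j : ZMod m, f (j.val + 1) := by
  rw [← sum_range_eq_sum_zmod m, range_eq_Ico, ← Ico_add_one_right_eq_Icc, ← zero_add 1,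
    ← sum_Ico_add' f]
  exact sum_congr rfl fun j hj => by rw [ZMod.val_cast_of_lt (mem_Ico.mp hj).2]

lemma sum_epsCoef_smul_wedge {i k : ℕ} (hik : (i : ZMod m) ≠ k) :
    ∑ j₁ ∈ Icc 1 m, ∑ j₂ ∈ Icc 1 m,
        epsCoef (m + 1) i j₁ k j₂ • wedge (ESub (m + 1) i j₁) (ESub (m + 1) k j₂)
      = crossCorrStep (wedgeBilin (A1Z (m + 1))) ((k : ZMod m) - (i : ZMod m))
          (ERow m i) (ERow m k) := by
  simp only [sum_Icc_one_eq_sum_zmod, epsCoef_eq_ite, crossCorrStep_apply, crossCorr_apply,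
    ← sum_sub_distrib]
  refine sum_congr rfl fun j₁ _ => ?_
  simp [hik, sub_smul, ite_smul, add_right_comm _ (1 : ZMod m), ERow, wedgeBilin_apply]

lemma Delta_eq_sum_crossCorrStep :
    Delta (m + 1) = ∑ k ∈ Icc 1 m, ∑ i ∈ Icc 1 m with i < k,
      crossCorrStep (wedgeBilin (A1Z (m + 1))) ((k : ZMod m) - (i : ZMod m))
        (ERow m i) (ERow m k) := by
  rw [Delta, IFinset, sum_filter]
  simp only [sum_product, Nat.add_sub_cancel]
  rw [sum_congr rfl fun i _ => sum_comm, sum_comm]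
  refine sum_congr rfl fun k hk => ?_
  rw [sum_filter]
  refine sum_congr rfl fun i hi => ?_
  rw [mem_Icc] at hi hk
  split_ifs with hik
  · have distinct : (i : ZMod m) ≠ k := by
      rw [Ne, ZMod.natCast_eq_natCast_iff, Nat.modEq_iff_dvd' hik.le]
      exact Nat.not_dvd_of_pos_of_lt (Nat.sub_pos_of_lt hik) (by lia)
    rw [← sum_epsCoef_smul_wedge distinct]
    refine sum_congr rfl fun j₁ _ => sum_congr rfl fun j₂ _ => if_pos ⟨hik.le, ?_⟩
    simp [hik.ne]
  · refine sum_eq_zero fun j₁ _ => sum_eq_zero fun j₂ _ => ite_eq_right_iff.mpr fun h => ?_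
    obtain rfl : i = k := le_antisymm h.1 (not_lt.mp hik)
    simp [epsCoef_eq_ite]

lemma Delta_eq_triangleSum :
    Delta (m + 1) = triangleSum (wedgeBilin (A1Z (m + 1))) (m + 1) (ERow m) := by
  rw [Delta_eq_sum_crossCorrStep, triangleSum]
  have drop_zeroth_row (k : ℕ) (hk : k ∈ range (m + 1)) :
      ∑ i ∈ Icc 1 m with i < k, crossCorrStep (wedgeBilin (A1Z (m + 1)))
          ((k : ZMod m) - (i : ZMod m)) (ERow m i) (ERow m k)
        = ∑ i ∈ range k, crossCorrStep (wedgeBilin (A1Z (m + 1)))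
          ((k : ZMod m) - (i : ZMod m)) (ERow m i) (ERow m k) := by
    refine sum_subset (fun i => by simp) fun i hi hi' => ?_
    obtain rfl : i = 0 := by
      simp only [mem_range, mem_filter, mem_Icc] at hk hi hi'
      lia
    simp [ERow_zero]
  rw [← sum_congr rfl drop_zeroth_row]
  refine sum_subset (fun k => by simp only [mem_Icc, mem_range]; lia) fun k hk hk' => ?_
  obtain rfl : k = 0 := by
    simp only [mem_range, mem_Icc] at hk hk'
    lia
  simp

end Delta

section Invariance

variable {m : ℕ} [NeZero m]

lemma update_ERow_natCast (i : ℕ) {k : ℕ} (hk : 1 ≤ k) (hkm : k ≤ m) :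
    update (ERow m i) 0 0 (k : ZMod m) = ESub (m + 1) i (k + 1) := by
  rcases hkm.eq_or_lt with rfl | hlt
  · simp [ESub_self_right]
  · have k_ne_zero : (k : ZMod m) ≠ 0 := by
      rw [Ne, ZMod.natCast_eq_zero_iff]
      exact Nat.not_dvd_of_pos_of_lt hk hlt
    rw [update_of_ne k_ne_zero, ERow_natCast i hlt]

lemma unitMulA1_ERow_of_eq_eps1 {u : (Lam (m + 1))ˣ} (hu : (u : Lam (m + 1)) = eps1 (m + 1)) (i : ℕ)
    (j : ZMod m) : unitMulA1 u (ERow m i j) = update (ERow m i) 0 0 (j + 1) - ERow m i 0 := by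
  have next : update (ERow m i) 0 0 (j + 1) = ESub (m + 1) i (j.val + 2) := by
    rw [← update_ERow_natCast i (Nat.succ_pos _) (ZMod.val_lt j)]
    simp
  rw [next, ERow_apply_zero]
  apply Subtype.ext
  simp only [coe_unitMulA1, hu, AddSubgroupClass.coe_sub, ERow, coe_ESub]
  ring

theorem wedge2Equiv_eps0_Delta {u : (Lam (m + 1))ˣ} (hu : (u : Lam (m + 1)) = eps0 (m + 1)) :
    wedge2Equiv (unitMulA1 u) (Delta (m + 1)) = Delta (m + 1) := by
  rw [Delta_eq_triangleSum, ← LinearEquiv.coe_coe, map_triangleSum (wedge2Equiv_wedge _)]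
  simp only [unitMulA1_ERow_of_eq_eps0 hu]
  calc triangleSum (wedgeBilin _) (m + 1) (fun i => ERow m (i + 1) - ERow m 1)
    _ = triangleSum (wedgeBilin _) (m + 1) (fun i => ERow m (i + 1)) :=
      triangleSum_sub_const wedgeBilin_isAlt _ _
    _ = triangleSum (wedgeBilin _) (m + 1) (ERow m) :=
      triangleSum_rotate wedgeBilin_isAlt (by simp) (by rw [ERow_self, ERow_zero])

lemma update_ERow_neg_natCast_sub_succ (i : ℕ) {r : ℕ} (hr : 1 ≤ r) (hrm : r < m) :
    update (ERow m i) 0 0 (-(r : ZMod m)) - update (ERow m i) 0 0 (1 - (r : ZMod m))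
      = -EStep (m + 1) i (-r) := by
  have neg_eq : -(r : ZMod m) = (m - r : ℕ) := by simp [Nat.cast_sub hrm.le]
  have one_sub_eq : 1 - (r : ZMod m) = (m - r + 1 : ℕ) := by
    rw [Nat.cast_add_one, ← neg_eq, neg_add_eq_sub]
  have periodic : EStep (m + 1) i (m - r + 1 : ℕ) = EStep (m + 1) i (-r) := by
    rw [← EStep_add_self i (-r : ℤ)]
    congr 1
    lia
  rw [one_sub_eq, neg_eq, update_ERow_natCast i (by lia) (by lia),
    update_ERow_natCast i (by lia) (by lia), ← neg_sub, ESub_succ_sub, periodic]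

lemma crossCorrStep_unitMulA1_of_eq_eps1 {u : (Lam (m + 1))ˣ}
    (hu : (u : Lam (m + 1)) = eps1 (m + 1)) (i k : ℕ) {r : ℕ} (hr : 1 ≤ r) (hrm : r < m) :
    crossCorrStep (wedgeBilin (A1Z (m + 1))) (r : ZMod m)
        (fun j => unitMulA1 u (ERow m i j)) (fun j => unitMulA1 u (ERow m k j))
      = crossCorrStep (wedgeBilin (A1Z (m + 1))) (r : ZMod m) (ERow m i) (ERow m k)
        + (wedge (EStep (m + 1) i (-r)) (ESub (m + 1) k 1)
          + wedge (EStep (m + 1) k r) (ESub (m + 1) i 1)) := by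
  have antisymmetry : -wedge (ESub (m + 1) i 1) (EStep (m + 1) k r)
      = wedge (EStep (m + 1) k r) (ESub (m + 1) i 1) := wedgeBilin_isAlt.neg _ _
  simp only [unitMulA1_ERow_of_eq_eps1 hu, crossCorrStep_update_zero_shift_sub_const,
    ERow_natCast_sub_pred k hr hrm, update_ERow_neg_natCast_sub_succ i hr hrm, ERow_apply_zero,
    map_neg, LinearMap.neg_apply, wedgeBilin_apply, ← antisymmetry]
  abel

lemma crossCorrStep_unitMulA1_sub_of_eq_eps1 {u : (Lam (m + 1))ˣ}
    (hu : (u : Lam (m + 1)) = eps1 (m + 1)) {i k : ℕ} (hik : i < k) (hk : k ≤ m) :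
    crossCorrStep (wedgeBilin (A1Z (m + 1))) ((k : ZMod m) - (i : ZMod m))
          (fun j => unitMulA1 u (ERow m i j)) (fun j => unitMulA1 u (ERow m k j))
        - crossCorrStep (wedgeBilin (A1Z (m + 1))) ((k : ZMod m) - (i : ZMod m))
          (ERow m i) (ERow m k)
      = wedge (EStep (m + 1) i (i - k)) (ESub (m + 1) k 1)
        + wedge (EStep (m + 1) k (k - i)) (ESub (m + 1) i 1) := by
  rcases i.eq_zero_or_pos with rfl | hi
  · have zeroth_row : (fun j => unitMulA1 u (ERow m 0 j)) = 0 := by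
      rw [ERow_zero]
      exact funext fun _ => map_zero _
    rw [zeroth_row]
    simp [ERow_zero, EStep_zero_left, ESub_zero_left, ← wedgeBilin_apply]
  · have step := crossCorrStep_unitMulA1_of_eq_eps1 hu i k (r := k - i) (by lia) (by lia)
    rw [Nat.cast_sub hik.le, Nat.cast_sub hik.le, neg_sub] at step
    exact sub_eq_of_eq_add' step

theorem wedge2Equiv_eps1_Delta_sub {u : (Lam (m + 1))ˣ} (hu : (u : Lam (m + 1)) = eps1 (m + 1)) :
    wedge2Equiv (unitMulA1 u) (Delta (m + 1)) - Delta (m + 1)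
      = ∑ k ∈ range (m + 1),
        wedge (∑ i ∈ range (m + 1), EStep (m + 1) i (i - k)) (ESub (m + 1) k 1) := by
  let f (i k : ℕ) : Wedge2 (A1Z (m + 1)) := wedge (EStep (m + 1) i (i - k)) (ESub (m + 1) k 1)
  have f_self (i : ℕ) : f i i = 0 := by
    simp only [f, sub_self, EStep_zero]
    exact wedgeBilin_isAlt _
  rw [Delta_eq_triangleSum, ← LinearEquiv.coe_coe, map_triangleSum (wedge2Equiv_wedge _)]
  simp only [triangleSum, ← sum_sub_distrib]
  calc _ = ∑ k ∈ range (m + 1), ∑ i ∈ range k, (f i k + f k i) :=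
      sum_congr rfl fun k hk => sum_congr rfl fun i hi =>
        crossCorrStep_unitMulA1_sub_of_eq_eps1 hu (mem_range.mp hi) (mem_range_succ_iff.mp hk)
    _ = ∑ k ∈ range (m + 1), ∑ i ∈ range (m + 1), f i k := sum_range_sum_range_add_swap f_self _
    _ = _ := sum_congr rfl fun k _ => by
      simp only [f, ← wedgeBilin_apply, map_sum, LinearMap.sum_apply]

theorem wedge2Equiv_eps1_Delta_sub_mem {u : (Lam (m + 1))ˣ}
    (hu : (u : Lam (m + 1)) = eps1 (m + 1)) :
    wedge2Equiv (unitMulA1 u) (Delta (m + 1)) - Delta (m + 1) ∈ SwedgeA1 (m + 1) := by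
  rw [wedge2Equiv_eps1_Delta_sub hu]
  refine sum_mem fun k _ => Submodule.subset_span ⟨_, _, ?_, rfl⟩
  rw [sum_EStep]
  exact neg_mem (gam_mem_Sgam _)

end Invariance

/-- multiplication by `ε₀` (resp. `ε₁`) is a `ℤ`-linear automorphism of `A₁`,
inducing a `ℤ`-linear automorphism of `⋀²_ℤ A₁` with `a ∧ b ↦ (ε₀·a) ∧ (ε₀·b)`
(resp. `(ε₁·a) ∧ (ε₁·b)`), and both `(ε₀·Δ) − Δ` and `(ε₁·Δ) − Δ` lie in `S ∧ A₁`. -/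
theorem stmt_14 (n : ℕ) (hn : 3 ≤ n) :
    ∃ (f0 f1 : ↥(A1Z n) ≃ₗ[ℤ] ↥(A1Z n))
      (F0 F1 : ↥(Wedge2 ↥(A1Z n)) ≃ₗ[ℤ] ↥(Wedge2 ↥(A1Z n))),
      (∀ x : ↥(A1Z n), (f0 x : Lam n) = eps0 n * (x : Lam n)) ∧
      (∀ x : ↥(A1Z n), (f1 x : Lam n) = eps1 n * (x : Lam n)) ∧
      (∀ a b : ↥(A1Z n), F0 (wedge a b) = wedge (f0 a) (f0 b)) ∧
      (∀ a b : ↥(A1Z n), F1 (wedge a b) = wedge (f1 a) (f1 b)) ∧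
      F0 (Delta n) - Delta n ∈ SwedgeA1 n ∧
      F1 (Delta n) - Delta n ∈ SwedgeA1 n := by
  obtain ⟨m, rfl⟩ : ∃ m, n = m + 1 := ⟨n - 1, by lia⟩
  have : NeZero m := ⟨by lia⟩
  let u₀ := Units.ofPowEqOne (eps0 (m + 1)) (m + 1) (eps0_pow_self _) m.succ_ne_zero
  let u₁ := Units.ofPowEqOne (eps1 (m + 1)) (m + 1) (eps1_pow_self _) m.succ_ne_zero
  refine ⟨unitMulA1 u₀, unitMulA1 u₁, wedge2Equiv (unitMulA1 u₀), wedge2Equiv (unitMulA1 u₁),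
    coe_unitMulA1 u₀, coe_unitMulA1 u₁, wedge2Equiv_wedge _, wedge2Equiv_wedge _, ?_,
    wedge2Equiv_eps1_Delta_sub_mem rfl⟩
  rw [wedge2Equiv_eps0_Delta rfl, sub_self]
  exact zero_mem _
end
end
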